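/- Let D ⊆ ℂ^N be a pseudoconvex domain and let K_0, …, K_n be compact 𝒪(D)-convex subsets of D. Suppose that for each j = 1, …, n there is f ∈ 𝒪(D) such that the polynomial hulls in ℂ of f(K_j) and of f(K_0 ∪ ⋯ ∪ K_{j−1}) are disjoint. Then K_0 ∪ ⋯ ∪ K_n is 𝒪(D)-convex. -/

import Mathlib

open Set Filter Topology Metric MeasureTheory
open scoped ENNReal NNReal InnerProductSpace ComplexConjugate

noncomputable section

/-- `ℂ^N` with the Euclidean structure. -/
abbrev EN (N : ℕ) := EuclideanSpace ℂ (Fin N)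

instance {N : ℕ} : MeasurableSpace (EN N) := borel _
instance {N : ℕ} : BorelSpace (EN N) := ⟨rfl⟩

/-- A domain: a nonempty open connected subset. -/
def IsDomainSet {N : ℕ} (D : Set (EN N)) : Prop := IsOpen D ∧ IsConnected D

/-- `u` is plurisubharmonic on `D`: upper semicontinuous on `D`, and its restriction to
every complex affine line satisfies the sub-mean value inequality on every closed disc
(of that line) contained in `D`. -/
def PlurisubharmonicOn {N : ℕ} (u : EN N → ℝ) (D : Set (EN N)) : Prop :=
  UpperSemicontinuousOn u D ∧
  ∀ (a b : EN N) (t₀ : ℂ) (r : ℝ), 0 < r →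
    (fun t : ℂ => a + t • b) '' Metric.closedBall t₀ r ⊆ D →
    u (a + t₀ • b) ≤ (2 * Real.pi)⁻¹ *
      ∫ θ in (0:ℝ)..(2 * Real.pi), u (a + (t₀ + r * Complex.exp (θ * Complex.I)) • b)

/-- `D` is a pseudoconvex domain: a domain carrying a continuous plurisubharmonic
exhaustion function. -/
def Pseudoconvex {N : ℕ} (D : Set (EN N)) : Prop :=
  IsDomainSet D ∧ ∃ u : EN N → ℝ, ContinuousOn u D ∧ PlurisubharmonicOn u D ∧
    ∀ c : ℝ, IsCompact (closure {z ∈ D | u z < c}) ∧ closure {z ∈ D | u z < c} ⊆ D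

/-- The space `𝒪(D)` of holomorphic functions on `D`, as a submodule of `ℂ^N → ℂ`. -/
def Hol {N : ℕ} (D : Set (EN N)) : Submodule ℂ (EN N → ℂ) where
  carrier := {f | DifferentiableOn ℂ f D}
  add_mem' hf hg := hf.add hg
  zero_mem' := differentiableOn_const 0
  smul_mem' c f hf := hf.const_smul c

/-- The topology of uniform convergence on compact subsets of `D`, on `𝒪(D)`. -/
instance holTopology {N : ℕ} (D : Set (EN N)) : TopologicalSpace ↥(Hol D) :=
  TopologicalSpace.induced
    (fun f => UniformOnFun.ofFun {K : Set (EN N) | K ⊆ D ∧ IsCompact K} f.1)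
    inferInstance

/-- A set is residual if it contains a dense `G_δ` set. -/
def ResidualIn {X : Type*} [TopologicalSpace X] (S : Set X) : Prop :=
  ∃ T : Set X, T ⊆ S ∧ IsGδ T ∧ Dense T

/-- `S` is densely lineable: `S ∪ {0}` contains a dense vector subspace. -/
def DenselyLineableIn {X : Type*} [TopologicalSpace X] [AddCommMonoid X] [Module ℂ X]
    (S : Set X) : Prop :=
  ∃ p : Submodule ℂ X, Dense (p : Set X) ∧ (p : Set X) ⊆ S ∪ {0}

/-- `S` is spaceable: `S ∪ {0}` contains a closed infinite-dimensional vector subspace. -/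
def SpaceableIn {X : Type*} [TopologicalSpace X] [AddCommMonoid X] [Module ℂ X]
    (S : Set X) : Prop :=
  ∃ p : Submodule ℂ X, IsClosed (p : Set X) ∧ ¬ Module.Finite ℂ ↥p ∧ (p : Set X) ⊆ S ∪ {0}

/-- A finite length path to `bD`: continuous and piecewise `C¹` on `[0,1)`, with values in `D`,
finite length (total variation), converging to a boundary point of `D` as `r → 1`. -/
def FiniteLengthPathTo {N : ℕ} (D : Set (EN N)) (γ : ℝ → EN N) : Prop :=
  MapsTo γ (Ico (0:ℝ) 1) D ∧ ContinuousOn γ (Ico (0:ℝ) 1) ∧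
  (∃ u : ℕ → ℝ, u 0 = 0 ∧ StrictMono u ∧ (∀ n, u n < 1) ∧ Tendsto u atTop (𝓝 1) ∧
    ∀ n, ContDiffOn ℝ 1 γ (Icc (u n) (u (n+1)))) ∧
  eVariationOn γ (Ico (0:ℝ) 1) < ⊤ ∧
  ∃ ζ ∈ frontier D, Tendsto γ (𝓝[<] (1:ℝ)) (𝓝 ζ)

/-- The set of `f ∈ 𝒪(D)` with maximal cluster set along every finite length path to `bD`. -/
def WildSet {N : ℕ} (D : Set (EN N)) : Set ↥(Hol D) :=
  {f | ∀ γ : ℝ → EN N, FiniteLengthPathTo D γ → ∀ c : ℂ,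
    ∃ r : ℕ → ℝ, (∀ n, r n ∈ Ico (0:ℝ) 1) ∧ Tendsto r atTop (𝓝 1) ∧
      Tendsto (fun n => f.1 (γ (r n))) atTop (𝓝 c)}

/-- The `𝒪(D)`-hull of `K`. -/
def holHull {N : ℕ} (D K : Set (EN N)) : Set (EN N) :=
  {z ∈ D | ∀ φ : EN N → ℂ, DifferentiableOn ℂ φ D → ‖φ z‖ ≤ ⨆ w ∈ K, ‖φ w‖}

/-- `K` is `𝒪(D)`-convex. -/
def HolConvexIn {N : ℕ} (D K : Set (EN N)) : Prop := K ⊆ D ∧ holHull D K = K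

/-- The polynomial hull of a compact subset of `ℂ`. -/
def polyHull1 (E : Set ℂ) : Set ℂ :=
  {z | ∀ p : Polynomial ℂ, ‖p.eval z‖ ≤ ⨆ w ∈ E, ‖p.eval w‖}

/-- The polynomial hull of a subset of `ℂ^N`. -/
def polyHull {N : ℕ} (E : Set (EN N)) : Set (EN N) :=
  {z | ∀ p : MvPolynomial (Fin N) ℂ,
    ‖MvPolynomial.eval (fun j => z j) p‖ ≤ ⨆ w ∈ E, ‖MvPolynomial.eval (fun j => w j) p‖}

/-- `E ⊆ ℂ^N` is polynomially convex. -/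
def PolynomiallyConvex {N : ℕ} (E : Set (EN N)) : Prop := polyHull E = E

/-- The (real) Hessian of `ρ` at `p`, applied to the pair `(v, w)`. -/
def Hess {N : ℕ} (ρ : EN N → ℝ) (p v w : EN N) : ℝ :=
  fderiv ℝ (fderiv ℝ ρ) p v w

/-- The Levi form `∑_{j,k} ∂²ρ/∂z_j∂z̄_k (p) w_j w̄_k`, expressed through the real Hessian. -/
def LeviForm {N : ℕ} (ρ : EN N → ℝ) (p w : EN N) : ℝ :=
  (Hess ρ p w w + Hess ρ p (Complex.I • w) (Complex.I • w)) / 4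

/-- `w` belongs to the complex tangent space `{w : ∑_j ∂ρ/∂z_j(p) w_j = 0}` at `p`. -/
def ComplexTangent {N : ℕ} (ρ : EN N → ℝ) (p w : EN N) : Prop :=
  fderiv ℝ ρ p w = 0 ∧ fderiv ℝ ρ p (Complex.I • w) = 0

/-- `ρ` is a `C²` defining function for `D` on the open neighborhood `V` of `cl D`. -/
def IsDefiningFunctionOn {N : ℕ} (D : Set (EN N)) (ρ : EN N → ℝ) (V : Set (EN N)) : Prop :=
  IsOpen V ∧ closure D ⊆ V ∧ ContDiffOn ℝ 2 ρ V ∧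
  D = {z ∈ V | ρ z < 0} ∧ ∀ p ∈ frontier D, fderiv ℝ ρ p ≠ 0

/-- `D` is a strictly pseudoconvex domain with defining function `ρ`. -/
def StrictPSCWith {N : ℕ} (D : Set (EN N)) (ρ : EN N → ℝ) : Prop :=
  IsDomainSet D ∧ Bornology.IsBounded D ∧ (∃ V, IsDefiningFunctionOn D ρ V) ∧
  ∀ p ∈ frontier D, ∀ w : EN N, w ≠ 0 → ComplexTangent ρ p w → 0 < LeviForm ρ p w

/-- `D` is a strictly pseudoconvex domain. -/
def StrictlyPseudoconvex {N : ℕ} (D : Set (EN N)) : Prop := ∃ ρ, StrictPSCWith D ρ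

/-- `ρ` and `σ` are at `C²`-distance `< ε` on `V`. -/
def C2DistLt {N : ℕ} (V : Set (EN N)) (ρ σ : EN N → ℝ) (ε : ℝ) : Prop :=
  ∀ z ∈ V, |ρ z - σ z| + ‖fderiv ℝ ρ z - fderiv ℝ σ z‖ +
    ‖fderiv ℝ (fderiv ℝ ρ) z - fderiv ℝ (fderiv ℝ σ) z‖ < ε

/-- The standing assumptions on the map `γ : bD × [0,1] → cl D`: it is `C^k`, maps
`bD × [0,1)` into `D`, satisfies `γ(x,1) = x`, and the curves `r ↦ γ(x,r)` hit `bD`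
transversally at `x` (the `r`-derivative at `1` is not annihilated by `dρ(x)`,
i.e. it is not tangent to `bD` at `x`). -/
def GammaMap {N : ℕ} (D : Set (EN N)) (ρ : EN N → ℝ) (γ : EN N × ℝ → EN N) (k : ℕ) : Prop :=
  ContDiffOn ℝ k γ ((frontier D) ×ˢ Icc (0:ℝ) 1) ∧
  (∀ x ∈ frontier D, ∀ r ∈ Ico (0:ℝ) 1, γ (x, r) ∈ D) ∧
  (∀ x ∈ frontier D, γ (x, 1) = x) ∧
  ∀ x ∈ frontier D, fderiv ℝ ρ x (derivWithin (fun r => γ (x, r)) (Icc (0:ℝ) 1) 1) ≠ 0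

/-- Assumption (†): for all `r` close enough to `1`, `bD_r := γ(bD × {r})` bounds a strictly
pseudoconvex domain `D_r ⊆ D` whose defining function converges to `ρ` in `C²` norm on a
neighborhood `V` of `cl D` as `r → 1`. -/
def Dagger {N : ℕ} (D : Set (EN N)) (ρ : EN N → ℝ) (γ : EN N × ℝ → EN N) : Prop :=
  ∃ V : Set (EN N), IsOpen V ∧ closure D ⊆ V ∧
  ∃ (Dr : ℝ → Set (EN N)) (ρr : ℝ → EN N → ℝ),
    ∀ ε > 0, ∃ r₀ ∈ Ico (0:ℝ) 1, ∀ r ∈ Ioo r₀ 1,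
      StrictPSCWith (Dr r) (ρr r) ∧ Dr r ⊆ D ∧
      frontier (Dr r) = (fun x => γ (x, r)) '' frontier D ∧
      C2DistLt V (ρr r) ρ ε

/-- The `(2N-1)`-dimensional Hausdorff (surface) measure on `bD`. -/
def surfMeasure {N : ℕ} (D : Set (EN N)) : Measure (EN N) :=
  (Measure.hausdorffMeasure (2 * (N:ℝ) - 1)).restrict (frontier D)

/-- The normalized surface measure on `bD`. -/
def surfMeasureNorm {N : ℕ} (D : Set (EN N)) : Measure (EN N) :=
  ((Measure.hausdorffMeasure (2 * (N:ℝ) - 1) : Measure (EN N)) (frontier D))⁻¹ • surfMeasure D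

/-- The set `𝒲((r_j))` of `f ∈ 𝒪(D)` such that every measurable function on `bD` is an
a.e. limit of `f ∘ γ(·, r_{j_k})` along some subsequence of `(r_j)`. -/
def WSet {N : ℕ} (D : Set (EN N)) (γ : EN N × ℝ → EN N) (r : ℕ → ℝ) : Set ↥(Hol D) :=
  {f | ∀ h : EN N → ℂ, Measurable h → ∃ φ : ℕ → ℕ, StrictMono φ ∧
    ∀ᵐ x ∂ surfMeasure D, Tendsto (fun k => f.1 (γ (x, r (φ k)))) atTop (𝓝 (h x))}

/-- `Γ` is a closed cap of a convex set `V`: the closure of a connected component of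
`V \ H` for some real affine hyperplane `H` (for convex `V`, a nonempty open half-space
slice of `V`). -/
def IsClosedCap {N : ℕ} (V : Set (EN N)) (Γ : Set (EN N)) : Prop :=
  ∃ (l : EN N →L[ℝ] ℝ) (c : ℝ), l ≠ 0 ∧ (V ∩ {z | c < l z}).Nonempty ∧
    Γ = closure (V ∩ {z | c < l z})

/-- `V` is a strictly convex domain: a bounded convex domain with `C²` boundary whose
defining function has positive definite real Hessian on the real tangent space. -/
def StrictlyConvexDomain {N : ℕ} (V : Set (EN N)) : Prop :=
  IsDomainSet V ∧ Bornology.IsBounded V ∧ Convex ℝ V ∧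
  ∃ (ρ : EN N → ℝ) (W : Set (EN N)), IsDefiningFunctionOn V ρ W ∧
    ∀ p ∈ frontier V, ∀ w : EN N, w ≠ 0 → fderiv ℝ ρ p w = 0 → 0 < Hess ρ p w w

/-- The defining function `‖z‖² - 1` of the unit ball. -/
def ballRho {N : ℕ} : EN N → ℝ := fun z => ‖z‖ ^ 2 - 1

/-- The normalized surface measure on the unit sphere of `ℂ^N`. -/
def sphMeasure (N : ℕ) : Measure (EN N) :=
  ((Measure.hausdorffMeasure (2 * (N:ℝ) - 1) : Measure (EN N)) (Metric.sphere 0 1))⁻¹ •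
    (Measure.hausdorffMeasure (2 * (N:ℝ) - 1)).restrict (Metric.sphere 0 1)

/-- `v` is a weight: increasing on `[0,∞)`, nonnegative, and tending to `∞`. -/
def IsWeight (v : ℝ → ℝ) : Prop :=
  (∀ x ∈ Ici (0:ℝ), 0 ≤ v x) ∧ MonotoneOn v (Ici 0) ∧ Tendsto v atTop atTop

/-- The norm `‖f‖ = sup_{z ∈ 𝔹_N} |f z| / v(|z|)` of `H_v^0`. -/
def hvNorm {N : ℕ} (v : ℝ → ℝ) (f : EN N → ℂ) : ℝ :=
  ⨆ z ∈ Metric.ball (0:EN N) 1, ‖f z‖ / v ‖z‖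

/-- Membership in `H_v^0`: `f` is holomorphic on `𝔹_N` and `sup_{|z|=r} |f z| / v(r) → 0`
as `r → 1⁻`. -/
def MemHv {N : ℕ} (v : ℝ → ℝ) (f : EN N → ℂ) : Prop :=
  DifferentiableOn ℂ f (Metric.ball 0 1) ∧
  Tendsto (fun r : ℝ => ⨆ z ∈ Metric.sphere (0:EN N) r, ‖f z‖ / v r) (𝓝[<] 1) (𝓝 0)

/-- `S` contains, relatively to `H_v^0` with its norm topology, a dense `G_δ` subset:
there are countably many relatively norm-open sets `U n` whose intersection with `H_v^0`
is norm-dense in `H_v^0` and contained in `S`. -/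
def ResidualInHv {N : ℕ} (v : ℝ → ℝ) (S : Set (EN N → ℂ)) : Prop :=
  ∃ U : ℕ → Set (EN N → ℂ),
    (∀ n, ∀ f, MemHv v f → f ∈ U n →
      ∃ δ > 0, ∀ g, MemHv v g → hvNorm v (g - f) < δ → g ∈ U n) ∧
    (∀ f, MemHv v f → ∀ δ > 0, ∃ g, MemHv v g ∧ (∀ n, g ∈ U n) ∧ hvNorm v (g - f) < δ) ∧
    ∀ f, MemHv v f → (∀ n, f ∈ U n) → f ∈ S

/-- `S` is densely lineable in `H_v^0`: `S ∪ {0}` contains a norm-dense subspace of `H_v^0`. -/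
def DenselyLineableInHv {N : ℕ} (v : ℝ → ℝ) (S : Set (EN N → ℂ)) : Prop :=
  ∃ p : Submodule ℂ (EN N → ℂ), (↑p ⊆ {f : EN N → ℂ | MemHv v f}) ∧ (↑p ⊆ S ∪ {0}) ∧
    ∀ f, MemHv v f → ∀ δ > 0, ∃ g ∈ p, hvNorm v (g - f) < δ

/-- `S` is spaceable in `H_v^0`: `S ∪ {0}` contains a norm-closed infinite-dimensional
subspace of `H_v^0`. -/
def SpaceableInHv {N : ℕ} (v : ℝ → ℝ) (S : Set (EN N → ℂ)) : Prop :=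
  ∃ p : Submodule ℂ (EN N → ℂ), (↑p ⊆ {f : EN N → ℂ | MemHv v f}) ∧ (↑p ⊆ S ∪ {0}) ∧
    ¬ Module.Finite ℂ ↥p ∧
    ∀ f, MemHv v f → (∀ δ > 0, ∃ g ∈ p, hvNorm v (g - f) < δ) → f ∈ p

/-- The standing assumptions on the family `{γ_z : z ∈ 𝔹_N}`: each `γ_z` is a `C¹` map
`b𝔹_N × [0,1] → cl 𝔹_N` into `𝔹_N` for `r < 1` with `γ_z(x,1) = x`, transversal approach
and (†), with joint continuity of `(z,x,r) ↦ γ_z(x,r)` and of `(z,r) ↦ ∂γ_z(x,r)/∂r`. -/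
def BallGammaFamily {N : ℕ} (γ : EN N → EN N × ℝ → EN N) : Prop :=
  (∀ z ∈ Metric.ball (0:EN N) 1,
    GammaMap (Metric.ball 0 1) ballRho (γ z) 1 ∧ Dagger (Metric.ball 0 1) ballRho (γ z)) ∧
  ContinuousOn (fun p : EN N × (EN N × ℝ) => γ p.1 p.2)
    (Metric.ball 0 1 ×ˢ (Metric.sphere 0 1 ×ˢ Icc (0:ℝ) 1)) ∧
  ∀ x ∈ Metric.sphere (0:EN N) 1,
    ContinuousOn (fun p : EN N × ℝ => derivWithin (fun r => γ p.1 (x, r)) (Icc (0:ℝ) 1) p.2)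
      (Metric.ball 0 1 ×ˢ Icc (0:ℝ) 1)

/-- The set of `f` such that for every `z ∈ 𝔹_N`, every measurable function on `b𝔹_N` is an
a.e. limit of `f ∘ γ_z(·, r_{j_k})` along some subsequence of `(r_j)`. -/
def WSetHv {N : ℕ} (γ : EN N → EN N × ℝ → EN N) (r : ℕ → ℝ) : Set (EN N → ℂ) :=
  {f | ∀ z ∈ Metric.ball (0:EN N) 1, ∀ h : EN N → ℂ, Measurable h →
    ∃ φ : ℕ → ℕ, StrictMono φ ∧
      ∀ᵐ x ∂ sphMeasure N, Tendsto (fun k => f (γ z (x, r (φ k)))) atTop (𝓝 (h x))}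

/-- The set `E_L^* = {γ_z(x,r) : x ∈ E, r ∈ [0,1], z ∈ L}`. -/
def EStarSet {N : ℕ} (γ : EN N → EN N × ℝ → EN N) (L E : Set (EN N)) : Set (EN N) :=
  {w | ∃ z ∈ L, ∃ x ∈ E, ∃ r ∈ Icc (0:ℝ) 1, w = γ z (x, r)}

/-- The Korányi approach region `D_α(x)`. -/
def Koranyi {N : ℕ} (α : ℝ) (x : EN N) : Set (EN N) :=
  {z ∈ Metric.ball (0:EN N) 1 | ‖1 - (⟪x, z⟫_ℂ : ℂ)‖ < α / 2 * (1 - ‖z‖ ^ 2)}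

/-- `h` has a `K`-limit at `x`: for every `α > 1` the values of `h` converge along every
sequence in `D_α(x)` converging to `x`. -/
def HasKLimitAt {N : ℕ} (h : EN N → ℂ) (x : EN N) : Prop :=
  ∀ α > (1:ℝ), ∃ c : ℂ, ∀ z : ℕ → EN N, (∀ i, z i ∈ Koranyi α x) →
    Tendsto z atTop (𝓝 x) → Tendsto (fun i => h (z i)) atTop (𝓝 c)

/-- The circle `bL_x = L_x ∩ b𝔹_N` cut out on the complex line through `x` and `0`. -/
def lineCircle {N : ℕ} (x : EN N) : Set (EN N) :=
  {z | ∃ t : ℂ, z = t • x} ∩ Metric.sphere 0 1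

end

/-!
By induction it suffices to treat two sets `K` and `L`. The polynomial hulls of `f(K)` and `f(L)`
are disjoint compact plane sets without holes. By Eilenberg's criterion, a point `w` outside a
compact plane set lies in a hole precisely when `z - w` has no continuous logarithm on the set, so
the union of the hulls has no holes either, and Runge's theorem yields polynomials `p` with
`p ∘ f ≈ 1` on `K` and `p ∘ f ≈ 0` on `L`. Suppose that a point `z` of the hull of `K ∪ L` lies
outside `K ∪ L`. Powers of a function that peaks at `z` relative to `K` damp `p ∘ f` on `K`, so that
`p (f z)` is small; exchanging `K` and `L`, so is `1 - p (f z)`, which is absurd.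
-/

/-- `f` has a continuous logarithm on `s`. For `f = (· - w)` this is Eilenberg's test for whether
`w` lies in a hole of `s`. The logarithm is an ambient function, only required to be continuous on
`s`. -/
def HasContinuousLogOn {X : Type*} [TopologicalSpace X] (f : X → ℂ) (s : Set X) : Prop :=
  ∃ g : X → ℂ, ContinuousOn g s ∧ ∀ x ∈ s, Complex.exp (g x) = f x

namespace HasContinuousLogOn

variable {X : Type*} [TopologicalSpace X] {f f₁ f₂ : X → ℂ} {s t : Set X}

theorem of_mapsTo_slitPlane (hf : ContinuousOn f s) (hs : MapsTo f s Complex.slitPlane) :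
    HasContinuousLogOn f s :=
  ⟨fun x => Complex.log (f x), hf.clog hs,
    fun _ hx => Complex.exp_log (Complex.slitPlane_ne_zero (hs hx))⟩

theorem congr (h : HasContinuousLogOn f₁ s) (heq : EqOn f₁ f₂ s) : HasContinuousLogOn f₂ s :=
  let ⟨g, hg, hgf⟩ := h
  ⟨g, hg, fun x hx => (hgf x hx).trans (heq hx)⟩

theorem mul (h₁ : HasContinuousLogOn f₁ s) (h₂ : HasContinuousLogOn f₂ s) :
    HasContinuousLogOn (fun x => f₁ x * f₂ x) s := by
  obtain ⟨g₁, hg₁, hgf₁⟩ := h₁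
  obtain ⟨g₂, hg₂, hgf₂⟩ := h₂
  exact ⟨fun x => g₁ x + g₂ x, hg₁.add hg₂,
    fun x hx => by rw [Complex.exp_add, hgf₁ x hx, hgf₂ x hx]⟩

theorem inv (h : HasContinuousLogOn f s) : HasContinuousLogOn (fun x => (f x)⁻¹) s :=
  let ⟨g, hg, hgf⟩ := h
  ⟨fun x => -g x, hg.neg, fun x hx => by rw [Complex.exp_neg, hgf x hx]⟩

theorem const {c : ℂ} (hc : c ≠ 0) : HasContinuousLogOn (fun _ => c) s :=
  ⟨fun _ => Complex.log c, continuousOn_const, fun _ _ => Complex.exp_log hc⟩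

theorem union (hs : IsClosed s) (ht : IsClosed t) (hst : Disjoint s t)
    (h₁ : HasContinuousLogOn f s) (h₂ : HasContinuousLogOn f t) :
    HasContinuousLogOn f (s ∪ t) := by
  classical
  obtain ⟨g₁, hg₁, hgf₁⟩ := h₁
  obtain ⟨g₂, hg₂, hgf₂⟩ := h₂
  have heq₁ : EqOn (s.piecewise g₁ g₂) g₁ s := s.piecewise_eqOn g₁ g₂
  have heq₂ : EqOn (s.piecewise g₁ g₂) g₂ t :=
    (s.piecewise_eqOn_compl g₁ g₂).mono hst.subset_compl_left
  refine ⟨s.piecewise g₁ g₂,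
    (hg₁.congr heq₁).union_of_isClosed (hg₂.congr heq₂) hs ht, ?_⟩
  rintro x (hx | hx)
  · rw [heq₁ hx, hgf₁ x hx]
  · rw [heq₂ hx, hgf₂ x hx]

end HasContinuousLogOn

section Plane

variable {A : Set ℂ} {x y w : ℂ}

theorem hasContinuousLogOn_sub_congr (hxy : ∀ z ∈ A, dist y x < dist z x) :
    HasContinuousLogOn (fun z => z - x) A ↔ HasContinuousLogOn (fun z => z - y) A := by
  have hx : ∀ z ∈ A, z - x ≠ 0 := fun z hz =>
    sub_ne_zero.2 (dist_pos.1 (dist_nonneg.trans_lt (hxy z hz)))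
  have hy : ∀ z ∈ A, z - y ≠ 0 := fun z hz =>
    sub_ne_zero.2 fun h => (hxy z hz).ne (by rw [h])
  -- `(z - y) / (z - x) = 1 + (x - y) / (z - x)` stays in the disc of radius one around `1`.
  have hquot : HasContinuousLogOn (fun z => (z - y) / (z - x)) A := by
    refine .of_mapsTo_slitPlane (by fun_prop (disch := assumption)) fun z hz => ?_
    rw [show (z - y) / (z - x) = 1 + (x - y) / (z - x) by field_simp [hx z hz]; ring]
    apply Complex.mem_slitPlane_of_norm_lt_one
    rw [norm_div, div_lt_one (norm_pos_iff.2 (hx z hz)), ← dist_eq_norm, ← dist_eq_norm,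
      dist_comm x y]
    exact hxy z hz
  refine ⟨fun h => (h.mul hquot).congr fun z hz => mul_div_cancel₀ _ (hx z hz),
    fun h => (h.mul hquot.inv).congr fun z hz => ?_⟩
  have := hx z hz
  have := hy z hz
  field_simp

theorem hasContinuousLogOn_sub_of_norm_lt (hw₀ : w ≠ 0) (hw : ∀ z ∈ A, ‖z‖ < ‖w‖) :
    HasContinuousLogOn (fun z => z - w) A := by
  have hquot : HasContinuousLogOn (fun z => 1 + -z / w) A := by
    refine .of_mapsTo_slitPlane (by fun_prop) fun z hz =>
      Complex.mem_slitPlane_of_norm_lt_one ?_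
    rw [norm_div, norm_neg, div_lt_one (norm_pos_iff.2 hw₀)]
    exact hw z hz
  refine ((HasContinuousLogOn.const (neg_ne_zero.2 hw₀)).mul hquot).congr fun z _ => ?_
  field_simp
  ring

/-- Whether `z - x` has a logarithm on `A` is locally constant in `x ∉ A`, and it has one when
`x` is far away. -/
theorem hasContinuousLogOn_sub_of_not_isBounded (hA : IsCompact A)
    (hw : ¬ Bornology.IsBounded (connectedComponentIn Aᶜ w)) :
    HasContinuousLogOn (fun z => z - w) A := by
  obtain ⟨R, hR₀, hR⟩ := hA.isBounded.exists_pos_norm_le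
  obtain ⟨v, hv, hRv⟩ : ∃ v ∈ connectedComponentIn Aᶜ w, R < ‖v‖ := by
    by_contra! h
    exact hw (isBounded_iff_forall_norm_le.2 ⟨R, h⟩)
  have hwA : w ∈ Aᶜ := connectedComponentIn_nonempty_iff.1 ⟨v, hv⟩
  have hlocal : ∀ x ∈ connectedComponentIn Aᶜ w, ∀ᶠ y in 𝓝[connectedComponentIn Aᶜ w] x,
      (HasContinuousLogOn (fun z => z - x) A ↔ HasContinuousLogOn (fun z => z - y) A) := by
    intro x hx
    obtain ⟨r, hr, hball⟩ := Metric.isOpen_iff.1 hA.isClosed.isOpen_compl x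
      (connectedComponentIn_subset _ _ hx)
    filter_upwards [mem_nhdsWithin_of_mem_nhds (ball_mem_nhds x hr)] with y hy
    refine hasContinuousLogOn_sub_congr fun z hz => (mem_ball.1 hy).trans_le ?_
    exact not_lt.1 fun h => hball (mem_ball.2 h) hz
  refine (isPreconnected_connectedComponentIn.induction₂
    (fun x y => HasContinuousLogOn (fun z => z - x) A ↔ HasContinuousLogOn (fun z => z - y) A)
    hlocal (fun _ _ _ _ _ _ => Iff.trans) (fun _ _ _ _ => Iff.symm) hv
    (mem_connectedComponentIn hwA)).1 ?_
  exact hasContinuousLogOn_sub_of_norm_lt (norm_pos_iff.1 (hR₀.trans hRv))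
    fun z hz => (hR z hz).trans_lt hRv

theorem not_hasContinuousLogOn_sub_sphere {R : ℝ} (hR : 0 < R) :
    ¬ HasContinuousLogOn (fun z => z - w) (sphere w R) := by
  rintro ⟨g, hg, hexp⟩
  have hmem : ∀ t, circleMap w R t ∈ sphere w R := circleMap_mem_sphere w hR.le
  have hanti : ∀ t, circleMap w R (t + Real.pi) - w = -(circleMap w R t - w) := fun t => by
    simp [circleMap, add_mul, Complex.exp_add]
  have hcont : Continuous fun t => g (circleMap w R t) :=
    hg.comp_continuous (continuous_circleMap w R) hmem
  let d : ℝ → ℂ := fun t => g (circleMap w R (t + Real.pi)) - g (circleMap w R t)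
  have hexp_d : ∀ t, Complex.exp (d t) = -1 := fun t => by
    have hne : circleMap w R t - w ≠ 0 := sub_ne_zero.2 (circleMap_ne_center hR.ne')
    simp only [d, Complex.exp_sub, hexp _ (hmem _), hanti, neg_div, div_self hne]
  have hd_cont : Continuous fun t => (d t).im :=
    Complex.continuous_im.comp ((hcont.comp (continuous_add_const Real.pi)).sub hcont)
  have hd_pi : (d Real.pi).im = -(d 0).im := by
    have : circleMap w R (Real.pi + Real.pi) = circleMap w R 0 := by
      rw [← two_mul, ← zero_add (2 * Real.pi), periodic_circleMap w R 0]
    simp [d, this]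
  obtain ⟨t, ht⟩ : ∃ t, (d t).im = 0 := by
    refine mem_range_of_exists_le_of_exists_ge hd_cont ?_ ?_
    · rcases le_total (d 0).im 0 with h | h
      · exact ⟨0, h⟩
      · exact ⟨Real.pi, by linarith⟩
    · rcases le_total (d 0).im 0 with h | h
      · exact ⟨Real.pi, by linarith⟩
      · exact ⟨0, h⟩
  have hre := congrArg Complex.re (hexp_d t)
  rw [Complex.exp_re, ht, Real.cos_zero, mul_one, Complex.neg_re, Complex.one_re] at hre
  linarith [Real.exp_pos (d t).re]

theorem frontier_connectedComponentIn_compl_subset {X : Type*} [TopologicalSpace X]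
    [LocallyConnectedSpace X] {F : Set X} (hF : IsClosed F) (x : X) :
    frontier (connectedComponentIn Fᶜ x) ⊆ F := by
  rw [hF.isOpen_compl.connectedComponentIn.frontier_eq]
  rintro y ⟨hy, hyx⟩
  by_contra hyF
  obtain ⟨z, hzy, hzx⟩ := mem_closure_iff.1 hy _
    (hF.isOpen_compl.connectedComponentIn (x := y)) (mem_connectedComponentIn hyF)
  rw [connectedComponentIn_eq hzx, ← connectedComponentIn_eq hzy] at hyx
  exact hyx (mem_connectedComponentIn hyF)

theorem hasContinuousLogOn_of_continuous {f : ℂ → ℂ} (hf : Continuous f) (hf₀ : ∀ z, f z ≠ 0)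
    (s : Set ℂ) : HasContinuousLogOn f s := by
  have : ContractibleSpace (univ : Set ℂ) := convex_univ.contractibleSpace univ_nonempty
  have hsc : IsSimplyConnected (univ : Set ℂ) :=
    inferInstanceAs (SimplyConnectedSpace (univ : Set ℂ))
  obtain ⟨g, hg, hexp⟩ := Complex.exists_continuousOn_eqOn_exp_comp hsc isOpen_univ
    hf.continuousOn (by rintro ⟨z, -, hz⟩; exact hf₀ z hz)
  exact ⟨g, hg.mono (subset_univ s), fun z _ => hexp (mem_univ z)⟩

/-- Glue `exp g`, with `g` a Tietze extension of the logarithm, to `z - w` along `frontier V`. -/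
theorem exists_nonvanishing_extension {X V : Set ℂ} (hX : IsClosed X)
    (hlog : HasContinuousLogOn (fun z => z - w) X) (hV : frontier V ⊆ X) (hwV : w ∈ V) :
    ∃ f : ℂ → ℂ, Continuous f ∧ (∀ z, f z ≠ 0) ∧ ∀ z ∉ closure V, f z = z - w := by
  classical
  obtain ⟨g, hg, hexp⟩ := hlog
  obtain ⟨G, hG⟩ := ContinuousMap.exists_restrict_eq hX
    (⟨X.domRestrict g, continuousOn_iff_continuous_domRestrict.1 hg⟩ : C(X, ℂ))
  have hGg : ∀ z ∈ X, G z = g z := fun z hz => DFunLike.congr_fun hG ⟨z, hz⟩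
  refine ⟨fun z => if z ∈ closure V then Complex.exp (G z) else z - w,
    Continuous.if (fun z hz => ?_) (by fun_prop) (by fun_prop), fun z => ?_,
    fun z hz => if_neg hz⟩
  · have hzX : z ∈ X := hV (frontier_closure_subset hz)
    rw [hGg z hzX, hexp z hzX]
  · dsimp only
    split_ifs with hz
    · exact Complex.exp_ne_zero _
    · exact sub_ne_zero.2 fun h => hz (subset_closure (h ▸ hwV))

theorem not_isBounded_of_hasContinuousLogOn_sub {X : Set ℂ} (hX : IsClosed X) (hw : w ∉ X)
    (hlog : HasContinuousLogOn (fun z => z - w) X) :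
    ¬ Bornology.IsBounded (connectedComponentIn Xᶜ w) := by
  intro hbdd
  obtain ⟨f, hf, hf₀, hfeq⟩ := exists_nonvanishing_extension hX hlog
    (frontier_connectedComponentIn_compl_subset hX w) (mem_connectedComponentIn hw)
  obtain ⟨R, hR₀, hR⟩ := hbdd.closure.subset_ball_lt 0 w
  refine not_hasContinuousLogOn_sub_sphere hR₀
    ((hasContinuousLogOn_of_continuous hf hf₀ (sphere w R)).congr fun z hz => hfeq z fun h => ?_)
  exact (mem_ball.1 (hR h)).ne (mem_sphere.1 hz)

end Plane

/-- `X` has no holes: no component of the complement of `X` in the plane is bounded. For compact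
`X` this is polynomial convexity. -/
def HasNoHoles (X : Set ℂ) : Prop :=
  ∀ w ∉ X, ¬ Bornology.IsBounded (connectedComponentIn Xᶜ w)

theorem HasNoHoles.union {A B : Set ℂ} (hA : IsCompact A) (hB : IsCompact B)
    (hAB : Disjoint A B) (hA' : HasNoHoles A) (hB' : HasNoHoles B) : HasNoHoles (A ∪ B) := by
  intro w hw
  rw [mem_union, not_or] at hw
  exact not_isBounded_of_hasContinuousLogOn_sub (hA.union hB).isClosed (by simpa using hw)
    (.union hA.isClosed hB.isClosed hAB
      (hasContinuousLogOn_sub_of_not_isBounded hA (hA' w hw.1))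
      (hasContinuousLogOn_sub_of_not_isBounded hB (hB' w hw.2)))

section BiSup

variable {X F : Type*} [TopologicalSpace X] [SeminormedAddCommGroup F] {K : Set X} {f : X → F}

theorem norm_le_biSup_norm (hK : IsCompact K) (hf : ContinuousOn f K) {x : X} (hx : x ∈ K) :
    ‖f x‖ ≤ ⨆ w ∈ K, ‖f w‖ := by
  obtain ⟨C, hC⟩ := hK.exists_bound_of_continuousOn hf
  refine le_ciSup₂ (f := fun w (_ : w ∈ K) => ‖f w‖) ⟨C, ?_⟩ x hx
  simpa [upperBounds] using hC

end BiSup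

section PolyHull

variable {E : Set ℂ}

theorem subset_polyHull1 (hE : IsCompact E) : E ⊆ polyHull1 E := fun _ hz p =>
  norm_le_biSup_norm hE p.continuous.continuousOn hz

theorem isClosed_polyHull1 : IsClosed (polyHull1 E) := by
  simp only [polyHull1, ofPred_forall]
  exact isClosed_iInter fun p => isClosed_le p.continuous.norm continuous_const

theorem isCompact_polyHull1 : IsCompact (polyHull1 E) := by
  refine Metric.isCompact_of_isClosed_isBounded isClosed_polyHull1
    (isBounded_iff_forall_norm_le.2 ⟨⨆ w ∈ E, ‖w‖, fun z hz => ?_⟩)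
  simpa using hz Polynomial.X

theorem hasNoHoles_polyHull1 : HasNoHoles (polyHull1 E) := by
  refine fun w hw hbdd => hw fun p => ?_
  refine Complex.norm_le_of_forall_mem_frontier_norm_le hbdd (f := fun z => p.eval z)
    p.differentiable.diffContOnCl (fun z hz => ?_)
    (subset_closure (mem_connectedComponentIn hw))
  exact frontier_connectedComponentIn_compl_subset isClosed_polyHull1 w hz p

end PolyHull

section CauchyPompeiu

variable {E : Type*} [NormedAddCommGroup E] [NormedSpace ℂ E] {f : ℂ → E}

/-- The Cauchy–Riemann operator `∂f/∂z̄`, one half of `∂f/∂x + i ∂f/∂y`: the density in the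
Cauchy–Pompeiu representation of `f`. -/
noncomputable def dbar (f : ℂ → E) (w : ℂ) : E :=
  (2⁻¹ : ℂ) • (fderiv ℝ f w 1 + Complex.I • fderiv ℝ f w Complex.I)

theorem dbar_eq_zero {w : ℂ} (hf : DifferentiableAt ℂ f w) : dbar f w = 0 := by
  rw [dbar, (differentiableAt_complex_iff_differentiableAt_real.1 hf).2, smul_smul,
    Complex.I_mul_I, neg_one_smul, add_neg_cancel, smul_zero]

theorem dbar_comp_add_right (f : ℂ → E) (w a : ℂ) :
    dbar (fun w => f (w + a)) w = dbar f (w + a) := by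
  simp only [dbar, fderiv_comp_add_right]

theorem continuous_dbar (hf : ContDiff ℝ 1 f) : Continuous (dbar f) := by
  have := hf.continuous_fderiv one_ne_zero
  unfold dbar
  fun_prop

theorem hasCompactSupport_dbar (hf : HasCompactSupport f) : HasCompactSupport (dbar f) :=
  (hf.fderiv ℝ).comp_left (g := fun L : ℂ →L[ℝ] E => (2⁻¹ : ℂ) • (L 1 + Complex.I • L Complex.I))
    (by simp)

theorem map_add_I_smul_map_mul_I (L : ℂ →L[ℝ] E) (v : ℂ) :
    L v + Complex.I • L (v * Complex.I) = conj v • (L 1 + Complex.I • L Complex.I) := by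
  have hL : ∀ u : ℂ, L u = (u.re : ℂ) • L 1 + (u.im : ℂ) • L Complex.I := fun u => by
    conv_lhs => rw [show u = u.re • (1 : ℂ) + u.im • Complex.I by simp]
    simp only [map_add, map_smul, Complex.coe_smul]
  have hconj : conj v = v.re - v.im * Complex.I := by simp [Complex.ext_iff]
  rw [hL v, hL (v * Complex.I), hconj, Complex.mul_I_re, Complex.mul_I_im, Complex.ofReal_neg]
  match_scalars
  · ring
  · linear_combination (v.im : ℂ) * Complex.I_mul_I

theorem smul_inv_smul_dbar_circleMap (f : ℂ → E) {r : ℝ} (hr : r ≠ 0) (θ : ℝ) :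
    r • (circleMap 0 r θ)⁻¹ • dbar f (circleMap 0 r θ) =
      (2⁻¹ : ℂ) • (fderiv ℝ f (circleMap 0 r θ) (circleMap 0 1 θ) +
        Complex.I • fderiv ℝ f (circleMap 0 r θ) (circleMap 0 1 θ * Complex.I)) := by
  have hconj : (r : ℂ) * (circleMap 0 r θ)⁻¹ = conj (circleMap 0 1 θ) := by
    have : (r : ℂ) ≠ 0 := Complex.ofReal_ne_zero.2 hr
    simp only [circleMap_zero, Complex.ofReal_one, one_mul, mul_inv, mul_inv_cancel_left₀ this,
      ← Complex.exp_neg, ← Complex.exp_conj, map_mul, Complex.conj_ofReal, Complex.conj_I, mul_neg]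
  rw [map_add_I_smul_map_mul_I, dbar, ← Complex.coe_smul r, smul_smul, hconj, smul_comm]

theorem integrableOn_fderiv_circleMap (hf : ContDiff ℝ 1 f) (hc : HasCompactSupport f)
    {v : ℝ → ℂ} (hv : Continuous v) :
    IntegrableOn (fun p : ℝ × ℝ => fderiv ℝ f (circleMap 0 p.1 p.2) (v p.2))
      polarCoord.target := by
  obtain ⟨R, hR⟩ := (hc.fderiv ℝ).isCompact.isBounded.subset_closedBall 0
  have := hf.continuous_fderiv one_ne_zero
  have hcont : Continuous fun p : ℝ × ℝ => fderiv ℝ f (circleMap 0 p.1 p.2) (v p.2) := by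
    unfold circleMap
    fun_prop
  refine ((hcont.continuousOn.integrableOn_compact
    (isCompact_Icc.prod isCompact_Icc :
      IsCompact (Icc 0 R ×ˢ Icc (-Real.pi) Real.pi))).of_forall_sdiff_eq_zero
    (measurableSet_Ioi.prod measurableSet_Ioo)) ?_
  rintro ⟨r, θ⟩ ⟨⟨hr, hθ⟩, hout⟩
  have hRr : R < r := by
    by_contra! h
    exact hout ⟨⟨(mem_Ioi.1 hr).le, h⟩, Ioo_subset_Icc_self hθ⟩
  have hsupp : circleMap 0 r θ ∉ tsupport (fderiv ℝ f) := fun h => by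
    have := mem_closedBall_zero_iff.1 (hR h)
    rw [norm_circleMap_zero, abs_of_pos hr] at this
    exact this.not_gt hRr
  simp only [image_eq_zero_of_notMem_tsupport hsupp, _root_.zero_apply]

variable [CompleteSpace E]

theorem integral_Ioi_fderiv_smul (hf : ContDiff ℝ 1 f) (hc : HasCompactSupport f)
    {v : ℂ} (hv : v ≠ 0) : ∫ r in Ioi (0 : ℝ), fderiv ℝ f (r • v) v = -f 0 := by
  have hderiv : ∀ r : ℝ, deriv (f ∘ (· • v)) r = fderiv ℝ f (r • v) v := fun r => by
    have hline : HasDerivAt (· • v) v r := by simpa using (hasDerivAt_id r).smul_const v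
    exact (((hf.differentiable one_ne_zero).differentiableAt.hasFDerivAt).comp_hasDerivAt r
      hline).deriv
  have hint := HasCompactSupport.integral_Ioi_deriv_eq (f := f ∘ (· • v)) (by fun_prop)
    (hc.comp_isClosedEmbedding (isClosedEmbedding_smul_left hv)) 0
  simpa only [hderiv, Function.comp_apply, zero_smul] using hint

theorem integral_fderiv_circleMap (hf : ContDiff ℝ 1 f) (c : ℂ) (r : ℝ) :
    ∫ θ in -Real.pi..Real.pi, fderiv ℝ f (circleMap c r θ) (circleMap 0 r θ * Complex.I) = 0 := by
  have hderiv : ∀ θ, HasDerivAt (f ∘ circleMap c r)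
      (fderiv ℝ f (circleMap c r θ) (circleMap 0 r θ * Complex.I)) θ := fun θ =>
    (hf.differentiable one_ne_zero).differentiableAt.hasFDerivAt.comp_hasDerivAt θ
      (hasDerivAt_circleMap c r θ)
  have := hf.continuous_fderiv one_ne_zero
  rw [intervalIntegral.integral_eq_sub_of_hasDerivAt (fun θ _ => hderiv θ)
    (Continuous.intervalIntegrable (by fun_prop) _ _), sub_eq_zero]
  simp only [Function.comp_apply]
  congr 1
  convert periodic_circleMap c r (-Real.pi) using 2
  ring

theorem setIntegral_polarCoord_fderiv_radial (hf : ContDiff ℝ 1 f)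
    (hc : HasCompactSupport f) :
    ∫ p in polarCoord.target, fderiv ℝ f (circleMap 0 p.1 p.2) (circleMap 0 1 p.2) =
      -(2 * Real.pi : ℂ) • f 0 := by
  have hint := integrableOn_fderiv_circleMap hf hc (continuous_circleMap 0 1)
  rw [polarCoord_target] at hint ⊢
  have hray : ∀ θ, ∫ r in Ioi (0 : ℝ), fderiv ℝ f (circleMap 0 r θ) (circleMap 0 1 θ) = -f 0 :=
    fun θ => by
      simpa [circleMap] using integral_Ioi_fderiv_smul hf hc (circleMap_ne_center one_ne_zero)
  rw [Measure.volume_eq_prod, ← setIntegral_prod_swap]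
  refine (setIntegral_prod _ hint.swap).trans ?_
  simp only [Function.comp_apply, Prod.swap_prod_mk, hray, setIntegral_const]
  rw [Real.volume_real_Ioo_of_le (by linarith [Real.pi_pos]), ← Complex.coe_smul]
  push_cast
  module

theorem setIntegral_polarCoord_fderiv_angular (hf : ContDiff ℝ 1 f)
    (hc : HasCompactSupport f) :
    ∫ p in polarCoord.target,
      fderiv ℝ f (circleMap 0 p.1 p.2) (circleMap 0 1 p.2 * Complex.I) = 0 := by
  have hint := integrableOn_fderiv_circleMap hf hc (v := fun θ => circleMap 0 1 θ * Complex.I)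
    (by fun_prop)
  rw [polarCoord_target] at hint ⊢
  rw [Measure.volume_eq_prod, setIntegral_prod _ hint]
  refine setIntegral_eq_zero_of_forall_eq_zero fun r hr => ?_
  have hscale (θ : ℝ) : circleMap 0 1 θ * Complex.I = r⁻¹ • (circleMap 0 r θ * Complex.I) := by
    have : (r : ℂ) ≠ 0 := Complex.ofReal_ne_zero.2 (mem_Ioi.1 hr).ne'
    simp only [circleMap_zero, Complex.real_smul, Complex.ofReal_inv, Complex.ofReal_one]
    field_simp
  simp only [hscale, map_smul]
  rw [integral_smul, ← integral_Ioc_eq_integral_Ioo,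
    ← intervalIntegral.integral_of_le (by linarith [Real.pi_pos]), integral_fderiv_circleMap hf,
    smul_zero]

theorem integral_inv_smul_dbar (hf : ContDiff ℝ 1 f) (hc : HasCompactSupport f) :
    ∫ w : ℂ, w⁻¹ • dbar f w = -(Real.pi : ℂ) • f 0 := by
  have hpolar : ∀ p ∈ polarCoord.target, p.1 • (Complex.polarCoord.symm p)⁻¹ •
      dbar f (Complex.polarCoord.symm p) = (2⁻¹ : ℂ) •
        (fderiv ℝ f (circleMap 0 p.1 p.2) (circleMap 0 1 p.2) +
          Complex.I • fderiv ℝ f (circleMap 0 p.1 p.2) (circleMap 0 1 p.2 * Complex.I)) := by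
    rintro ⟨r, θ⟩ hp
    have hr : 0 < r := (polarCoord_target ▸ hp).1
    rw [← smul_inv_smul_dbar_circleMap f hr.ne',
      show Complex.polarCoord.symm (r, θ) = circleMap 0 r θ by
        rw [Complex.polarCoord_symm_apply, circleMap_zero, Complex.exp_mul_I, Complex.ofReal_cos,
          Complex.ofReal_sin]]
  rw [← Complex.integral_comp_polarCoord_symm,
    setIntegral_congr_fun polarCoord.open_target.measurableSet hpolar, integral_smul,
    integral_add, integral_smul, setIntegral_polarCoord_fderiv_angular hf hc,
    setIntegral_polarCoord_fderiv_radial hf hc]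
  · rw [smul_zero, add_zero, smul_smul]
    congr 1
    ring
  · exact integrableOn_fderiv_circleMap hf hc (continuous_circleMap 0 1)
  · exact (integrableOn_fderiv_circleMap hf hc
      ((continuous_circleMap 0 1).mul continuous_const)).smul Complex.I

theorem integral_inv_sub_smul_dbar (hf : ContDiff ℝ 1 f) (hc : HasCompactSupport f) (z : ℂ) :
    ∫ w : ℂ, (w - z)⁻¹ • dbar f w = -(Real.pi : ℂ) • f z := by
  have := integral_inv_smul_dbar (f := fun w => f (w + z)) (by fun_prop)
    (hc.comp_homeomorph (Homeomorph.addRight z))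
  rw [← integral_add_right_eq_self _ z]
  simpa only [dbar_comp_add_right, add_sub_cancel_right, zero_add] using this

end CauchyPompeiu

section Runge

theorem integral_mem_of_isClosed {X F : Type*} [MeasurableSpace X] {μ : Measure X}
    [NormedAddCommGroup F] [NormedSpace ℂ F] [CompleteSpace F] {p : Submodule ℂ F}
    (hp : IsClosed (p : Set F)) {f : X → F} (hf : ∀ x, f x ∈ p) : ∫ x, f x ∂μ ∈ p := by
  have : CompleteSpace p := hp.completeSpace_coe
  have := p.subtypeₗᵢ.integral_comp_comm (μ := μ) fun x => (⟨f x, hf x⟩ : p)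
  exact this ▸ Subtype.mem _

theorem continuous_smul_resolvent {A : Type*} [NormedRing A] [NormedAlgebra ℂ A] [CompleteSpace A]
    {a : A} {g : ℂ → ℂ} (hg : Continuous g) (hga : ∀ᶠ w in 𝓝ˢ (spectrum ℂ a), g w = 0) :
    Continuous fun w => g w • resolvent a w := by
  refine continuous_iff_continuousAt.2 fun w => ?_
  by_cases hw : w ∈ spectrum ℂ a
  · refine continuousAt_const.congr (f := fun _ => 0) ?_
    filter_upwards [eventually_nhdsSet_iff_forall.1 hga w hw] with v hv
    rw [hv, zero_smul]
  · exact hg.continuousAt.smul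
      (spectrum.hasDerivAt_resolvent_const_left (not_not.1 hw)).continuousAt

variable {X U : Set ℂ}

theorem spectrum_X_toContinuousMapOn [CompactSpace X] :
    spectrum ℂ (Polynomial.X.toContinuousMapOn X) = X := by
  ext z
  simp [ContinuousMap.spectrum_eq_range]

/-- Passing to a closed subalgebra only adds bounded components of the complement to the
spectrum. -/
theorem resolvent_X_mem_topologicalClosure [CompactSpace X] (hX : HasNoHoles X) {w : ℂ}
    (hw : w ∉ X) :
    resolvent (Polynomial.X.toContinuousMapOn X) w ∈
      (polynomialFunctions X).topologicalClosure := by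
  set S := (polynomialFunctions X).topologicalClosure
  set x := Polynomial.X.toContinuousMapOn X
  have hS : IsClosed (S : Set C(X, ℂ)) := Subalgebra.isClosed_topologicalClosure _
  have hxS : x ∈ S := Subalgebra.le_topologicalClosure _ ⟨Polynomial.X, by simp, rfl⟩
  have hwS : w ∈ resolventSet ℂ (⟨x, hxS⟩ : S) := by
    by_contra h
    have := Subalgebra.spectrum_isBounded_connectedComponentIn S ⟨x, hxS⟩ h
    exact hX w hw (by rwa [spectrum_X_toContinuousMapOn] at this)
  obtain ⟨u, hu⟩ := hwS
  have hunit : algebraMap ℂ C(X, ℂ) w - x = Units.map (S.subtype : S →* C(X, ℂ)) u := by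
    simp [hu]
  rw [resolvent, hunit, Ring.inverse_unit, ← map_inv]
  exact (u⁻¹ : Sˣ).1.2

theorem resolvent_X_apply [CompactSpace X] {w : ℂ} (hw : w ∉ X) (z : X) :
    resolvent (Polynomial.X.toContinuousMapOn X) w z = (w - z)⁻¹ := by
  have hunit : IsUnit (algebraMap ℂ C(X, ℂ) w - Polynomial.X.toContinuousMapOn X) :=
    spectrum.notMem_iff.1 (by rwa [spectrum_X_toContinuousMapOn])
  have hmul := DFunLike.congr_fun (Ring.mul_inverse_cancel _ hunit) z
  exact eq_inv_of_mul_eq_one_right (by simpa [resolvent] using hmul)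

theorem exists_polynomial_of_mem_topologicalClosure {F : C(X, ℂ)} [CompactSpace X]
    (hF : F ∈ (polynomialFunctions X).topologicalClosure) {ε : ℝ} (hε : 0 < ε) :
    ∃ p : Polynomial ℂ, ∀ z : X, ‖p.eval (z : ℂ) - F z‖ < ε := by
  obtain ⟨-, ⟨p, -, rfl⟩, hp⟩ := Metric.mem_closure_iff.1 hF ε hε
  refine ⟨p, fun z => ?_⟩
  rw [← dist_eq_norm, dist_comm]
  exact (ContinuousMap.dist_apply_le_dist z).trans_lt hp

/-- By the Cauchy–Pompeiu formula `f` is a superposition on `X` of resolvents of the coordinate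
function. -/
theorem exists_polynomial_near_of_dbar_eq_zero (hXc : IsCompact X) (hX : HasNoHoles X)
    {f : ℂ → ℂ} (hf : ContDiff ℝ 1 f) (hc : HasCompactSupport f)
    (hdbar : ∀ᶠ w in 𝓝ˢ X, dbar f w = 0) {ε : ℝ} (hε : 0 < ε) :
    ∃ p : Polynomial ℂ, ∀ z ∈ X, ‖p.eval z - f z‖ < ε := by
  have : CompactSpace X := isCompact_iff_compactSpace.1 hXc
  set S := (polynomialFunctions X).topologicalClosure
  let Φ : ℂ → C(X, ℂ) := fun w => dbar f w • resolvent (Polynomial.X.toContinuousMapOn X) w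
  have hΦ_mem : ∀ w, Φ w ∈ S := fun w => by
    by_cases hw : w ∈ X
    · simp only [Φ, hdbar.self_of_nhdsSet w hw, zero_smul, S.zero_mem]
    · exact S.smul_mem (resolvent_X_mem_topologicalClosure hX hw) _
  have hΦ_int : Integrable Φ :=
    (continuous_smul_resolvent (continuous_dbar hf)
      (by rwa [spectrum_X_toContinuousMapOn])).integrable_of_hasCompactSupport
      (hasCompactSupport_dbar hc).smul_right
  have hΦ_apply : ∀ z : X, (∫ w, Φ w) z = -(Real.pi : ℂ) * f z := fun z => by
    rw [ContinuousMap.integral_apply hΦ_int, ← smul_eq_mul, ← integral_inv_sub_smul_dbar hf hc]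
    refine integral_congr_ae (.of_forall fun w => ?_)
    by_cases hw : w ∈ X
    · simp [Φ, hdbar.self_of_nhdsSet w hw]
    · simp [Φ, resolvent_X_apply hw, mul_comm]
  have hmem : (-(Real.pi : ℂ))⁻¹ • ∫ w, Φ w ∈ S :=
    S.smul_mem (integral_mem_of_isClosed (p := Subalgebra.toSubmodule S)
      (polynomialFunctions X).isClosed_topologicalClosure hΦ_mem) _
  obtain ⟨p, hp⟩ := exists_polynomial_of_mem_topologicalClosure hmem hε
  refine ⟨p, fun z hz => ?_⟩
  have hpi : -(Real.pi : ℂ) ≠ 0 := neg_ne_zero.2 (Complex.ofReal_ne_zero.2 Real.pi_ne_zero)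
  simpa only [ContinuousMap.smul_apply, hΦ_apply, smul_eq_mul, inv_mul_cancel_left₀ hpi]
    using hp ⟨z, hz⟩

theorem exists_contDiff_cutoff {K U : Set ℂ} (hK : IsCompact K) (hU : IsOpen U) (hKU : K ⊆ U) :
    ∃ χ : ℂ → ℝ, ContDiff ℝ 1 χ ∧ HasCompactSupport χ ∧ tsupport χ ⊆ U ∧
      ∀ᶠ w in 𝓝ˢ K, χ w = 1 := by
  obtain ⟨L, hL, hKL, hLU⟩ := exists_compact_between hK hU hKU
  obtain ⟨χ, h0, h1, -⟩ := exists_contMDiffMap_zero_one_nhds_of_isClosed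
    (modelWithCornersSelf ℝ ℂ) (n := 1) (isOpen_interior.isClosed_compl (s := interior L))
    hK.isClosed (disjoint_compl_left_iff_subset.2 hKL)
  have hsupp : tsupport χ ⊆ L := closure_minimal (fun w hw => interior_subset <| by
    by_contra h
    exact hw (h0.self_of_nhdsSet w h)) hL.isClosed
  exact ⟨χ, χ.contMDiff.contDiff, hL.of_isClosed_subset (isClosed_tsupport _) hsupp,
    hsupp.trans hLU, h1⟩

theorem exists_polynomial_near_of_differentiableOn (hXc : IsCompact X) (hX : HasNoHoles X)
    (hU : IsOpen U) (hXU : X ⊆ U) {f : ℂ → ℂ} (hf : DifferentiableOn ℂ f U) {ε : ℝ} (hε : 0 < ε) :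
    ∃ p : Polynomial ℂ, ∀ z ∈ X, ‖p.eval z - f z‖ < ε := by
  obtain ⟨χ, hχ, hχc, hχU, hχX⟩ := exists_contDiff_cutoff hXc hU hXU
  have hχf_smooth : ContDiff ℝ 1 fun w => χ w • f w := by
    refine contDiff_iff_contDiffAt.2 fun w => ?_
    by_cases hw : w ∈ tsupport χ
    · exact hχ.contDiffAt.smul
        (((hf.contDiffOn hU).contDiffAt (hU.mem_nhds (hχU hw))).restrict_scalars ℝ)
    · refine (contDiffAt_const (c := 0)).congr_of_eventuallyEq ?_
      filter_upwards [notMem_tsupport_iff_eventuallyEq.1 hw] with v hv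
      rw [hv, Pi.zero_apply, zero_smul]
  have hχf_dbar : ∀ᶠ w in 𝓝ˢ X, dbar (fun w => χ w • f w) w = 0 := by
    filter_upwards [hχX.eventually_nhdsSet, hU.mem_nhdsSet.2 hXU] with w hw hwU
    refine dbar_eq_zero ((hf.differentiableAt (hU.mem_nhds hwU)).congr_of_eventuallyEq ?_)
    filter_upwards [hw] with v hv
    rw [hv, one_smul]
  obtain ⟨p, hp⟩ :=
    exists_polynomial_near_of_dbar_eq_zero hXc hX hχf_smooth hχc.smul_right hχf_dbar hε
  refine ⟨p, fun z hz => ?_⟩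
  simpa only [hχX.self_of_nhdsSet z hz, one_smul] using hp z hz

theorem exists_polynomial_near_one_near_zero {A B : Set ℂ} (hA : IsCompact A) (hB : IsCompact B)
    (hAB : Disjoint A B) (hA' : HasNoHoles A) (hB' : HasNoHoles B) {ε : ℝ} (hε : 0 < ε) :
    ∃ p : Polynomial ℂ, (∀ z ∈ A, ‖p.eval z - 1‖ < ε) ∧ ∀ z ∈ B, ‖p.eval z‖ < ε := by
  obtain ⟨U, V, hU, hV, hAU, hBV, hUV⟩ := SeparatedNhds.of_isCompact_isCompact hA hB hAB
  have hV_zero : ∀ z ∈ V, U.indicator (1 : ℂ → ℂ) z = 0 := fun z hz =>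
    indicator_of_notMem (hUV.notMem_of_mem_right hz) 1
  have hf : DifferentiableOn ℂ (U.indicator (1 : ℂ → ℂ)) (U ∪ V) :=
    .union_of_isOpen ((differentiableOn_const 1).congr fun z hz => indicator_of_mem hz 1)
      ((differentiableOn_const 0).congr hV_zero) hU hV
  obtain ⟨p, hp⟩ := exists_polynomial_near_of_differentiableOn (hA.union hB)
    (hA'.union hA hB hAB hB') (hU.union hV) (union_subset_union hAU hBV) hf hε
  refine ⟨p, fun z hz => ?_, fun z hz => ?_⟩
  · simpa [hAU hz] using hp z (Or.inl hz)
  · simpa [hV_zero z (hBV hz)] using hp z (Or.inr hz)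

end Runge

section HolomorphicHull

variable {N : ℕ} {D K L : Set (EN N)} {z : EN N}

theorem subset_holHull (hK : IsCompact K) (hKD : K ⊆ D) : K ⊆ holHull D K := fun _ hz =>
  ⟨hKD hz, fun _ hφ => norm_le_biSup_norm hK (hφ.continuousOn.mono hKD) hz⟩

theorem norm_le_of_mem_holHull (hz : z ∈ holHull D K) {φ : EN N → ℂ}
    (hφ : DifferentiableOn ℂ φ D) {C : ℝ} (hC : 0 ≤ C) (hφK : ∀ w ∈ K, ‖φ w‖ ≤ C) :
    ‖φ z‖ ≤ C :=
  (hz.2 φ hφ).trans <| Real.iSup_le (fun w => Real.iSup_le (hφK w) hC) hC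

theorem HolConvexIn.exists_peak (hKD : HolConvexIn D K) (hK : IsCompact K) (hz : z ∈ D)
    (hzK : z ∉ K) {ε : ℝ} (hε : 0 < ε) :
    ∃ ψ : EN N → ℂ, DifferentiableOn ℂ ψ D ∧ ψ z = 1 ∧ ∀ w ∈ K, ‖ψ w‖ ≤ ε := by
  obtain ⟨φ, hφ, hlt⟩ : ∃ φ : EN N → ℂ, DifferentiableOn ℂ φ D ∧ ⨆ w ∈ K, ‖φ w‖ < ‖φ z‖ := by
    by_contra! h
    exact hzK (hKD.2 ▸ ⟨hz, h⟩)
  have hφK : ∀ w ∈ K, ‖φ w‖ ≤ ⨆ w ∈ K, ‖φ w‖ := fun w =>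
    norm_le_biSup_norm hK (hφ.continuousOn.mono hKD.1)
  have hφz : 0 < ‖φ z‖ :=
    (Real.iSup_nonneg fun w => Real.iSup_nonneg fun _ => norm_nonneg (φ w)).trans_lt hlt
  obtain ⟨m, hm⟩ := exists_pow_lt_of_lt_one hε ((div_lt_one hφz).2 hlt)
  refine ⟨fun w => (φ w * (φ z)⁻¹) ^ m, (hφ.mul_const _).pow m, ?_, fun w hw => ?_⟩
  · dsimp only
    rw [mul_inv_cancel₀ (norm_pos_iff.1 hφz), one_pow]
  · rw [norm_pow, ← div_eq_mul_inv, norm_div]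
    refine le_trans ?_ hm.le
    gcongr
    exact hφK w hw

/-- Multiplying `P` by a function that peaks at `z` and is tiny on `K` makes its size on `K`
irrelevant. -/
theorem exists_norm_le_of_mem_holHull_union (hK : IsCompact K) (hKD : HolConvexIn D K)
    (hL : IsCompact L) (hLD : L ⊆ D) (hz : z ∈ holHull D (K ∪ L)) (hzK : z ∉ K)
    {C η : ℝ} (hC : 0 < C) (hη : 0 < η) :
    ∃ δ > 0, ∀ P : EN N → ℂ, DifferentiableOn ℂ P D → (∀ w ∈ K, ‖P w‖ ≤ C) →
      (∀ w ∈ L, ‖P w‖ ≤ δ) → ‖P z‖ ≤ η := by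
  obtain ⟨ψ, hψ, hψz, hψK⟩ := hKD.exists_peak hK hz.1 hzK (div_pos hη hC)
  obtain ⟨M, hM, hψL⟩ :=
    (hL.image_of_continuousOn (hψ.continuousOn.mono hLD)).isBounded.exists_pos_norm_le
  refine ⟨η / M, div_pos hη hM, fun P hP hPK hPL => ?_⟩
  suffices ‖ψ z * P z‖ ≤ η by rwa [hψz, one_mul] at this
  refine norm_le_of_mem_holHull hz (hψ.mul hP) hη.le ?_
  rintro w (hw | hw)
  · calc ‖ψ w * P w‖ ≤ η / C * C := norm_mul_le_of_le (hψK w hw) (hPK w hw)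
      _ = η := div_mul_cancel₀ η hC.ne'
  · calc ‖ψ w * P w‖ ≤ M * (η / M) :=
          norm_mul_le_of_le (hψL _ (mem_image_of_mem ψ hw)) (hPL w hw)
      _ = η := mul_div_cancel₀ η hM.ne'

theorem HolConvexIn.union_of_approx_indicator (hK : IsCompact K) (hL : IsCompact L)
    (hKD : HolConvexIn D K) (hLD : HolConvexIn D L)
    (hsep : ∀ ε > 0, ∃ P : EN N → ℂ, DifferentiableOn ℂ P D ∧
      (∀ w ∈ K, ‖P w - 1‖ < ε) ∧ ∀ w ∈ L, ‖P w‖ < ε) : HolConvexIn D (K ∪ L) := by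
  have hsub : K ∪ L ⊆ D := union_subset hKD.1 hLD.1
  refine ⟨hsub, Subset.antisymm (fun z hz => ?_)
    (subset_holHull (hK.union hL) hsub)⟩
  by_contra! hzKL
  rw [mem_union, not_or] at hzKL
  obtain ⟨δ₁, hδ₁, hsmall₁⟩ := exists_norm_le_of_mem_holHull_union hK hKD hL hLD.1 hz hzKL.1
    (C := 2) (η := 1 / 3) (by norm_num) (by norm_num)
  obtain ⟨δ₂, hδ₂, hsmall₂⟩ := exists_norm_le_of_mem_holHull_union hL hLD hK hKD.1
    (union_comm K L ▸ hz) hzKL.2 (C := 2) (η := 1 / 3) (by norm_num) (by norm_num)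
  obtain ⟨P, hP, hPK, hPL⟩ := hsep (min 1 (min δ₁ δ₂)) (by positivity)
  simp only [lt_min_iff] at hPK hPL
  have hPz : ‖P z‖ ≤ 1 / 3 := hsmall₁ P hP (fun w hw => by
    linarith [norm_le_norm_sub_add (P w) 1, (hPK w hw).1, norm_one (α := ℂ)])
    fun w hw => (hPL w hw).2.1.le
  have hPz' : ‖P z - 1‖ ≤ 1 / 3 := hsmall₂ (fun w => P w - 1) (hP.sub_const 1) (fun w hw => by
    linarith [norm_sub_le (P w) 1, (hPL w hw).1, norm_one (α := ℂ)])
    fun w hw => (hPK w hw).2.2.le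
  linarith [norm_sub_norm_le 1 (P z), norm_sub_rev 1 (P z), norm_one (α := ℂ)]

theorem HolConvexIn.union_of_disjoint_polyHull1 (hK : IsCompact K) (hL : IsCompact L)
    (hKD : HolConvexIn D K) (hLD : HolConvexIn D L) {f : EN N → ℂ}
    (hf : DifferentiableOn ℂ f D)
    (hdisj : Disjoint (polyHull1 (f '' K)) (polyHull1 (f '' L))) : HolConvexIn D (K ∪ L) := by
  refine .union_of_approx_indicator hK hL hKD hLD fun ε hε => ?_
  obtain ⟨p, hpK, hpL⟩ := exists_polynomial_near_one_near_zero isCompact_polyHull1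
    isCompact_polyHull1 hdisj hasNoHoles_polyHull1 hasNoHoles_polyHull1 hε
  have hmaps : ∀ {S : Set (EN N)}, IsCompact S → S ⊆ D → MapsTo f S (polyHull1 (f '' S)) :=
    fun hS hSD w hw => subset_polyHull1
      (hS.image_of_continuousOn (hf.continuousOn.mono hSD)) (mem_image_of_mem f hw)
  exact ⟨fun w => p.eval (f w), p.differentiable.comp_differentiableOn hf,
    fun w hw => hpK _ (hmaps hK hKD.1 hw), fun w hw => hpL _ (hmaps hL hLD.1 hw)⟩

end HolomorphicHull

theorem union_holConvex_general {N n : ℕ} (D : Set (EN N)) (K : Fin (n + 1) → Set (EN N))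
    (hK : ∀ j, IsCompact (K j) ∧ HolConvexIn D (K j))
    (hsep : ∀ j : Fin (n + 1), j ≠ 0 → ∃ f : EN N → ℂ, DifferentiableOn ℂ f D ∧
      Disjoint (polyHull1 (f '' K j)) (polyHull1 (f '' ⋃ i < j, K i))) :
    HolConvexIn D (⋃ j, K j) := by
  have hpartial : ∀ j, HolConvexIn D (⋃ i ≤ j, K i) := by
    refine Fin.induction (by simpa using (hK 0).2) fun j hj => ?_
    have hlt : ⋃ i < j.succ, K i = ⋃ i ≤ j.castSucc, K i := by
      simp only [Fin.le_castSucc_iff]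
    have hle : ⋃ i ≤ j.succ, K i = K j.succ ∪ ⋃ i < j.succ, K i := by
      simp only [le_iff_eq_or_lt, iUnion_or, iUnion_union_distrib, iUnion_iUnion_eq_left]
    have hcompact : IsCompact (⋃ i ≤ j.castSucc, K i) :=
      (finite_Iic j.castSucc).isCompact_biUnion fun i _ => (hK i).1
    obtain ⟨f, hf, hdisj⟩ := hsep j.succ j.succ_ne_zero
    rw [hle, hlt]
    exact .union_of_disjoint_polyHull1 (hK _).1 hcompact (hK _).2 hj hf (hlt ▸ hdisj)
  simpa only [Fin.le_last, iUnion_true] using hpartial (Fin.last n)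

/-- **Corollary on unions of `𝒪(D)`-convex sets.** If `K_0, …, K_n` are compact
`𝒪(D)`-convex subsets of a pseudoconvex domain `D` and for each `j ≥ 1` some `f ∈ 𝒪(D)`
separates the polynomial hulls of `f(K_j)` and `f(K_0 ∪ ⋯ ∪ K_{j-1})`, then
`K_0 ∪ ⋯ ∪ K_n` is `𝒪(D)`-convex. -/
theorem union_holConvex {N n : ℕ} (D : Set (EN N)) (hD : Pseudoconvex D)
    (K : Fin (n + 1) → Set (EN N))
    (hK : ∀ j, IsCompact (K j) ∧ HolConvexIn D (K j))
    (hsep : ∀ j : Fin (n + 1), j ≠ 0 → ∃ f : EN N → ℂ, DifferentiableOn ℂ f D ∧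
      Disjoint (polyHull1 (f '' K j)) (polyHull1 (f '' ⋃ i < j, K i))) :
    HolConvexIn D (⋃ j, K j) :=
  union_holConvex_general D K hK hsep
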